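/- Let K be an (n_I + n_Γ) × (n_I + n_Γ) real matrix written in block form K = [[K_II, K_IΓ], [K_ΓI, K_ΓΓ]] with K_II invertible, let S = K_ΓΓ − K_ΓI K_II⁻¹ K_IΓ be invertible, and let P = [[K_II, K_IΓ], [0, S]]. Then the minimal polynomial of K P⁻¹ divides (X − 1)²; moreover, if K_ΓI K_II⁻¹ ≠ 0, the minimal polynomial of K P⁻¹ equals (X − 1)². -/

import Mathlib

open Matrix Polynomial

/-! The block factorization `K = L * P` with `L = [[1, 0], [K_ΓI K_II⁻¹, 1]]` gives `K * P⁻¹ = L`.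
The matrix `L - 1` squares to zero, and it vanishes only if its block `K_ΓI K_II⁻¹` does. -/

theorem associated_prime_pow_succ_of_dvd_of_not_dvd {M : Type*} [CommMonoidWithZero M]
    [IsCancelMulZero M] {p q : M} {k : ℕ} (hp : Prime p) (hdvd : q ∣ p ^ (k + 1))
    (hndvd : ¬ q ∣ p ^ k) : Associated q (p ^ (k + 1)) := by
  obtain ⟨i, hi, hq⟩ := (dvd_prime_pow hp (k + 1)).1 hdvd
  have hki : k < i := by
    by_contra! hik
    exact hndvd (hq.dvd.trans (pow_dvd_pow p hik))
  rwa [show k + 1 = i by lia]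

section Minpoly

variable {F R : Type*} [Field F] [Ring R] [Algebra F R] {x : R} {a : F} {k : ℕ}

theorem minpoly_dvd_X_sub_C_pow_iff :
    minpoly F x ∣ (X - C a) ^ k ↔ (x - algebraMap F R a) ^ k = 0 := by
  rw [minpoly.dvd_iff, map_pow, map_sub, aeval_X, aeval_C]

theorem minpoly_eq_X_sub_C_pow_succ (hzero : (x - algebraMap F R a) ^ (k + 1) = 0)
    (hne : (x - algebraMap F R a) ^ k ≠ 0) : minpoly F x = (X - C a) ^ (k + 1) := by
  have hdvd : minpoly F x ∣ (X - C a) ^ (k + 1) := minpoly_dvd_X_sub_C_pow_iff.2 hzero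
  have hndvd : ¬ minpoly F x ∣ (X - C a) ^ k := mt minpoly_dvd_X_sub_C_pow_iff.1 hne
  have hmonic : ((X - C a) ^ (k + 1)).Monic := (monic_X_sub_C a).pow (k + 1)
  have hint : IsIntegral F x := ⟨(X - C a) ^ (k + 1), hmonic, minpoly.dvd_iff.1 hdvd⟩
  exact eq_of_monic_of_associated (minpoly.monic hint) hmonic
    (associated_prime_pow_succ_of_dvd_of_not_dvd (prime_X_sub_C a) hdvd hndvd)

end Minpoly

section LowerUnitriangular

variable {m n R F : Type*}

theorem fromBlocks_one_zero_one_sub_one [DecidableEq m] [DecidableEq n] [AddGroupWithOne R]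
    (C : Matrix n m R) :
    fromBlocks (1 : Matrix m m R) 0 C (1 : Matrix n n R) - 1 = fromBlocks 0 0 C 0 := by
  rw [← fromBlocks_one, sub_eq_add_neg, fromBlocks_neg, fromBlocks_add]
  simp only [add_neg_cancel, neg_zero, add_zero]

theorem fromBlocks_zero_zero_zero_mul_self [Fintype m] [Fintype n] [NonUnitalNonAssocSemiring R]
    (C : Matrix n m R) :
    fromBlocks (0 : Matrix m m R) 0 C (0 : Matrix n n R) * fromBlocks 0 0 C 0 = 0 := by
  simp only [fromBlocks_multiply, Matrix.mul_zero, Matrix.zero_mul, add_zero, fromBlocks_zero]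

variable [Fintype m] [Fintype n] [DecidableEq m] [DecidableEq n]

theorem fromBlocks_one_zero_one_sub_one_sq [Ring R] (C : Matrix n m R) :
    (fromBlocks (1 : Matrix m m R) 0 C (1 : Matrix n n R) - 1) ^ 2 = 0 := by
  rw [fromBlocks_one_zero_one_sub_one, sq, fromBlocks_zero_zero_zero_mul_self]

variable [Field F]

theorem minpoly_fromBlocks_one_zero_one_dvd (C : Matrix n m F) :
    minpoly F (fromBlocks (1 : Matrix m m F) 0 C (1 : Matrix n n F)) ∣ (X - 1) ^ 2 := by
  rw [← C_1, minpoly_dvd_X_sub_C_pow_iff, map_one, fromBlocks_one_zero_one_sub_one_sq]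

theorem minpoly_fromBlocks_one_zero_one {C : Matrix n m F} (hC : C ≠ 0) :
    minpoly F (fromBlocks (1 : Matrix m m F) 0 C (1 : Matrix n n F)) = (X - 1) ^ 2 := by
  rw [← C_1]
  apply minpoly_eq_X_sub_C_pow_succ
  · rw [map_one, fromBlocks_one_zero_one_sub_one_sq]
  · rw [map_one, pow_one, fromBlocks_one_zero_one_sub_one, ← fromBlocks_zero, Ne, fromBlocks_inj]
    exact fun h => hC h.2.2.1

end LowerUnitriangular

section SchurComplement

variable {l m n R : Type*} [Fintype m] [DecidableEq m] [CommRing R] {A : Matrix m m R}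

theorem fromBlocks_eq_lower_mul_upper_schur [Fintype l] [DecidableEq l] (hA : IsUnit A)
    (B : Matrix m n R) (C : Matrix l m R) (D : Matrix l n R) :
    fromBlocks A B C D =
      fromBlocks (1 : Matrix m m R) 0 (C * A⁻¹) (1 : Matrix l l R) *
        fromBlocks A B 0 (D - C * A⁻¹ * B) := by
  have hcancel : C * A⁻¹ * A = C :=
    nonsing_inv_mul_cancel_right A C ((isUnit_iff_isUnit_det A).1 hA)
  simp only [fromBlocks_multiply, Matrix.one_mul, Matrix.zero_mul, Matrix.mul_zero, add_zero,
    hcancel, add_sub_cancel]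

theorem fromBlocks_mul_inv_upper_schur [Fintype n] [DecidableEq n] (hA : IsUnit A)
    (B : Matrix m n R) (C : Matrix n m R) (D : Matrix n n R) (hS : IsUnit (D - C * A⁻¹ * B)) :
    fromBlocks A B C D * (fromBlocks A B 0 (D - C * A⁻¹ * B))⁻¹ =
      fromBlocks 1 0 (C * A⁻¹) 1 := by
  have hP : IsUnit (fromBlocks A B 0 (D - C * A⁻¹ * B)) :=
    isUnit_fromBlocks_zero₂₁.2 ⟨hA, hS⟩
  rw [fromBlocks_eq_lower_mul_upper_schur hA]
  exact mul_nonsing_inv_cancel_right _ _ ((isUnit_iff_isUnit_det _).1 hP)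

end SchurComplement

theorem schur_preconditioned_minpoly_general {m n F : Type*} [Fintype m] [DecidableEq m]
    [Fintype n] [DecidableEq n] [Field F] {A : Matrix m m F} (hA : IsUnit A) (B : Matrix m n F)
    (C : Matrix n m F) (D : Matrix n n F) (hS : IsUnit (D - C * A⁻¹ * B)) :
    minpoly F (fromBlocks A B C D * (fromBlocks A B 0 (D - C * A⁻¹ * B))⁻¹) ∣ (X - 1) ^ 2 ∧
      (C * A⁻¹ ≠ 0 →
        minpoly F (fromBlocks A B C D * (fromBlocks A B 0 (D - C * A⁻¹ * B))⁻¹) =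
          (X - 1) ^ 2) := by
  rw [fromBlocks_mul_inv_upper_schur hA B C D hS]
  exact ⟨minpoly_fromBlocks_one_zero_one_dvd _, minpoly_fromBlocks_one_zero_one⟩

/-- With the Schur-complement block upper-triangular preconditioner `P`,
the minimal polynomial of `K * P⁻¹` divides `(X − 1)²`; moreover, if
`K_ΓI K_II⁻¹ ≠ 0` then the minimal polynomial equals `(X − 1)²`. -/
theorem schur_preconditioned_minpoly
    (nI nΓ : ℕ)
    (KII : Matrix (Fin nI) (Fin nI) ℝ) (KIΓ : Matrix (Fin nI) (Fin nΓ) ℝ)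
    (KΓI : Matrix (Fin nΓ) (Fin nI) ℝ) (KΓΓ : Matrix (Fin nΓ) (Fin nΓ) ℝ)
    (hKII : IsUnit KII)
    (S : Matrix (Fin nΓ) (Fin nΓ) ℝ)
    (hS : S = KΓΓ - KΓI * KII⁻¹ * KIΓ)
    (hSu : IsUnit S)
    (K : Matrix (Fin nI ⊕ Fin nΓ) (Fin nI ⊕ Fin nΓ) ℝ)
    (hK : K = fromBlocks KII KIΓ KΓI KΓΓ)
    (P : Matrix (Fin nI ⊕ Fin nΓ) (Fin nI ⊕ Fin nΓ) ℝ)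
    (hP : P = fromBlocks KII KIΓ 0 S) :
    minpoly ℝ (K * P⁻¹) ∣ (X - 1) ^ 2 ∧
      (KΓI * KII⁻¹ ≠ 0 → minpoly ℝ (K * P⁻¹) = (X - 1) ^ 2) := by
  subst hS hK hP
  exact schur_preconditioned_minpoly_general hKII KIΓ KΓI KΓΓ hSu
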